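/- Let d ≥ 1 be an integer, σ > 0, and 0 < ε₀ ≤ 4·exp(−e^{1+σ^{−2}}). Set y₀ := ln(4/ε₀), let w₀ > 0 be the unique positive real with w₀·e^{w₀} = y₀/(eσ²), set x₀ := 2y₀/w₀ and K := binom(x₀+d, d)·(ln(y₀)/y₀)^d. Then for all 0 < ε ≤ ε₀ one has ln N(ε, U_σ(B_2^d)) ≤ K · (ln(4/ε))^{d+1} / (ln ln(4/ε))^{d}. -/

import Mathlib

/-!
The proof truncates the expansion `f = ∑ k, a k * e_k` at degree `m` and covers the remaining
finite-dimensional part by a volume argument.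

* **Tail.** By the multinomial theorem, `∑_{|k| = j} e_k(x) ^ 2` is the mass at `j` of a Poisson
  distribution with parameter `2σ²‖x‖² ≤ 2σ²` (`sum_piAntidiag_ek_sq`), so by Cauchy-Schwarz the
  squared sup norm of the tail is at most `(2σ²)^(m+1) / (m+1)!` (`sum_ek_sq_le`). With
  `y = ln (4/ε)`, `w * exp w = y / (eσ²)`, `x = 2y/w` and `m = ⌊x⌋`, this is at most
  `exp (-2y) = (ε/4)²` (`tail_le`).
* **Main part.** There are `binom(m+d, d)` multi-indices of degree at most `m`, and evaluation is
  1-Lipschitz from Euclidean coefficient space to the sup norm. A `3ε/4`-net of the Euclidean unit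
  ball with `(1 + 8/(3ε)) ^ binom(m+d, d)` points (`exists_net_unitBall`) thus covers it. Since
  `1 + 8/(3ε) ≤ 4/ε`, this gives `ln N(ε) ≤ binom(x+d, d) * y`.
* **Monotonicity.** It remains to see that `binom(x+d, d) * (ln y / y)^d` does not increase with
  `y ≥ y₀`. Its factors are multiples of `(x + i) * ln y / y`; here `ln y / y` decreases for
  `y ≥ e`, and `x * ln y / y = 2 ln y / w` decreases as soon as `w ≥ 1/σ²` (`log_div_le`), that is,
  for `y ≥ exp (1 + 1/σ²)`.
-/

open Real Filter MeasureTheory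

/-- Generalized binomial coefficient `binom(t+d, d) = (1/d!) ∏_{i=1}^d (t+i)`. -/
noncomputable def gbinom (t : ℝ) (d : ℕ) : ℝ :=
  (∏ i ∈ Finset.range d, (t + (i : ℝ) + 1)) / (Nat.factorial d : ℝ)

/-- Covering number of a set of real-valued functions w.r.t. the sup distance,
by bounded functions. -/
noncomputable def covN {α : Type*} (ε : ℝ) (A : Set (α → ℝ)) : ℕ :=
  sInf {n : ℕ | ∃ g : Fin n → (α → ℝ),
    (∀ i, ∃ C : ℝ, ∀ y, |g i y| ≤ C) ∧
    ∀ f ∈ A, ∃ i, ∀ y, |f y - g i y| ≤ ε}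

/-- The functions `e_k^σ` forming an ONB of the Gaussian RKHS. -/
noncomputable def ek (d : ℕ) (σ : ℝ) (k : Fin d → ℕ) (x : EuclideanSpace ℝ (Fin d)) : ℝ :=
  Real.sqrt ((2 * σ ^ 2) ^ (∑ i, k i) / ∏ i, (Nat.factorial (k i) : ℝ)) *
    (∏ i, x i ^ k i) * Real.exp (-σ ^ 2 * ‖x‖ ^ 2)

/-- The image `U_σ(Y)` of the closed unit ball of the Gaussian RKHS on `Y`. -/
noncomputable def UBall (d : ℕ) (σ : ℝ) (Y : Set (EuclideanSpace ℝ (Fin d))) :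
    Set (Y → ℝ) :=
  {f | ∃ a : (Fin d → ℕ) → ℝ,
    Summable (fun k => a k ^ 2) ∧ (∑' k, a k ^ 2) ≤ 1 ∧
    (∀ x : Y, Summable (fun k => |a k * ek d σ k ↑x|)) ∧
    (∀ x : Y, f x = ∑' k, a k * ek d σ k ↑x)}

/-- The closed Euclidean unit ball of `ℝ^d`. -/
def B2 (d : ℕ) : Set (EuclideanSpace ℝ (Fin d)) := Metric.closedBall 0 1

/-! ### Nets of the unit ball in finite dimension -/

/-- Volume bound for nets: the unit ball of a finite-dimensional real normed space has a `δ`-net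
with at most `(1 + 2 / δ) ^ dim` points. -/
lemma exists_net_unitBall {E : Type*} [NormedAddCommGroup E] [NormedSpace ℝ E]
    [FiniteDimensional ℝ E] {δ : ℝ} (hδ : 0 < δ) :
    ∃ s : Finset E, (s.card : ℝ) ≤ (1 + 2 / δ) ^ Module.finrank ℝ E ∧
      ∀ x : E, ‖x‖ ≤ 1 → ∃ c ∈ s, ‖x - c‖ ≤ δ := by
  classical
  borelize E
  let μ : Measure E := Measure.addHaar
  -- Balls of radius `δ / 2` around a `δ`-separated set are disjoint inside a ball of radius
  -- `1 + δ / 2`; comparing volumes bounds the cardinality.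
  have key : ∀ s : Finset E, (∀ c ∈ s, ‖c‖ ≤ 1) →
      (∀ c ∈ s, ∀ c' ∈ s, c ≠ c' → δ ≤ ‖c - c'‖) →
      (s.card : ℝ) ≤ (1 + 2 / δ) ^ Module.finrank ℝ E := by
    intro s hs h
    have hδ2 : 0 < δ / 2 := by positivity
    have hρ : 0 < 1 + δ / 2 := by positivity
    have D : Set.Pairwise (s : Set E)
        (Function.onFun Disjoint fun c => Metric.ball (c : E) (δ / 2)) := by
      rintro c hc c' hc' hcc
      apply Metric.ball_disjoint_ball
      rw [dist_eq_norm]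
      have := h c hc c' hc' hcc
      linarith
    have hsub : (⋃ c ∈ s, Metric.ball (c : E) (δ / 2)) ⊆ Metric.ball (0 : E) (1 + δ / 2) := by
      refine Set.iUnion₂_subset fun x hx => ?_
      apply Metric.ball_subset_ball'
      rw [dist_zero_right]
      linarith [hs x hx]
    have I : (s.card : ENNReal) * ENNReal.ofReal ((δ / 2) ^ Module.finrank ℝ E)
          * μ (Metric.ball 0 1) ≤
        ENNReal.ofReal ((1 + δ / 2) ^ Module.finrank ℝ E) * μ (Metric.ball 0 1) := by
      calc _ = μ (⋃ c ∈ s, Metric.ball (c : E) (δ / 2)) := by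
            rw [measure_biUnion_finset D fun c _ => measurableSet_ball]
            simp only [μ.addHaar_ball_of_pos _ hδ2]
            simp only [Finset.sum_const, nsmul_eq_mul, mul_assoc]
        _ ≤ μ (Metric.ball (0 : E) (1 + δ / 2)) := measure_mono hsub
        _ = _ := by simp only [μ.addHaar_ball_of_pos _ hρ]
    have J := (ENNReal.mul_le_mul_iff_left (Metric.measure_ball_pos μ _ zero_lt_one).ne'
      measure_ball_lt_top.ne).1 I
    have K := ENNReal.toReal_le_of_le_ofReal (pow_nonneg hρ.le _) J
    rw [ENNReal.toReal_mul, ENNReal.toReal_natCast, ENNReal.toReal_ofReal (by positivity)] at K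
    have e : (1 + 2 / δ) = (1 + δ / 2) / (δ / 2) := by field_simp; ring
    rw [e, div_pow, le_div_iff₀ (by positivity)]
    exact K
  -- A separated subset of maximal cardinality is a net.
  let A : Set ℕ := {n | ∃ s : Finset E, s.card = n ∧ (∀ c ∈ s, ‖c‖ ≤ 1) ∧
      (∀ c ∈ s, ∀ c' ∈ s, c ≠ c' → δ ≤ ‖c - c'‖)}
  have hA0 : A.Nonempty := ⟨0, ∅, by simp⟩
  have hAb : BddAbove A := by
    refine ⟨⌊(1 + 2 / δ) ^ Module.finrank ℝ E⌋₊, ?_⟩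
    rintro _ ⟨s, rfl, h1, h2⟩
    exact Nat.le_floor (key s h1 h2)
  obtain ⟨s, hcard, h1, h2⟩ := Nat.sSup_mem hA0 hAb
  refine ⟨s, key s h1 h2, fun x hx => ?_⟩
  by_contra! hcon
  have hxs : x ∉ s := fun hxs => by
    have := hcon x hxs
    simp at this
    linarith
  have hmem : (insert x s).card ∈ A := by
    refine ⟨insert x s, rfl, ?_, ?_⟩
    · simpa [hx] using h1
    · intro c hc c' hc' hne
      rcases Finset.mem_insert.1 hc with rfl | hcs <;>
        rcases Finset.mem_insert.1 hc' with rfl | hcs'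
      · exact absurd rfl hne
      · exact (hcon c' hcs').le
      · rw [norm_sub_rev]; exact (hcon c hcs).le
      · exact h2 c hcs c' hcs' hne
  have := le_csSup hAb hmem
  rw [Finset.card_insert_of_notMem hxs] at this
  omega

/-! ### Squared sums of the basis functions -/

/-- By the multinomial theorem, the degree-`j` part of `∑ k, e_k(x) ^ 2` is the mass at `j` of the
Poisson distribution with parameter `2σ²‖x‖²`. -/
lemma sum_piAntidiag_ek_sq (d : ℕ) (σ : ℝ) (x : EuclideanSpace ℝ (Fin d)) (j : ℕ) :
    ∑ k ∈ Finset.piAntidiag Finset.univ j, ek d σ k x ^ 2 =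
      (2 * σ ^ 2 * ‖x‖ ^ 2) ^ j / (Nat.factorial j : ℝ) * exp (-(2 * σ ^ 2 * ‖x‖ ^ 2)) := by
  have hn : ‖x‖ ^ 2 = ∑ i, x i ^ 2 := by
    rw [EuclideanSpace.norm_sq_eq]; simp
  rw [mul_pow, hn, Finset.sum_pow_eq_sum_piAntidiag, ← hn, Finset.mul_sum, Finset.sum_div,
    Finset.sum_mul]
  refine Finset.sum_congr rfl fun k hk => ?_
  have hk' : ∑ i, k i = j := (Finset.mem_piAntidiag.1 hk).1
  have hspec : ((∏ i, (Nat.factorial (k i) : ℝ)) * Nat.multinomial Finset.univ k) =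
      Nat.factorial j := by
    rw [← hk']; exact_mod_cast Nat.multinomial_spec Finset.univ k
  have hpos : 0 < ∏ i, (Nat.factorial (k i) : ℝ) :=
    Finset.prod_pos fun i _ => by exact_mod_cast Nat.factorial_pos _
  have hM : (0 : ℝ) < Nat.multinomial Finset.univ k := by
    exact_mod_cast Nat.multinomial_pos _ _
  unfold ek
  rw [mul_pow, mul_pow, Real.sq_sqrt (by positivity), hk', ← hspec, ← Finset.prod_pow,
    ← Real.exp_nat_mul]
  have e1 : ∏ i, (x i ^ k i) ^ 2 = ∏ i, (x i ^ 2) ^ k i :=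
    Finset.prod_congr rfl fun i _ => by rw [← pow_mul, ← pow_mul, mul_comm]
  have e2 : ((2 : ℕ) : ℝ) * (-σ ^ 2 * ‖x‖ ^ 2) = -(2 * σ ^ 2 * ‖x‖ ^ 2) := by push_cast; ring
  rw [e1, e2]
  field_simp

/-- Poisson tail bound: the squares of the basis functions of degree at least `n` sum to at most
`(2σ²)^n / n!` on the unit ball. -/
lemma sum_ek_sq_le (d : ℕ) (σ : ℝ) (x : EuclideanSpace ℝ (Fin d)) (hx : ‖x‖ ≤ 1) (n : ℕ)
    (T : Finset (Fin d → ℕ)) (hT : ∀ k ∈ T, n ≤ ∑ i, k i) :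
    ∑ k ∈ T, ek d σ k x ^ 2 ≤ (2 * σ ^ 2) ^ n / (Nat.factorial n : ℝ) := by
  classical
  set l : ℝ := 2 * σ ^ 2 * ‖x‖ ^ 2 with hl
  have hl0 : 0 ≤ l := by positivity
  have hl1 : l ≤ 2 * σ ^ 2 := by
    have : ‖x‖ ^ 2 ≤ 1 := pow_le_one₀ (norm_nonneg _) hx
    have h2 : 0 ≤ 2 * σ ^ 2 := by positivity
    nlinarith
  obtain ⟨M, hM⟩ : ∃ M, ∀ k ∈ T, ∑ i, k i < n + M := by
    refine ⟨T.sup (fun k => ∑ i, k i) + 1, fun k hk => ?_⟩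
    exact Nat.lt_of_lt_of_le (Nat.lt_succ_of_le
      (Finset.le_sup (f := fun k : Fin d → ℕ => ∑ i, k i) hk)) (Nat.le_add_left _ _)
  have hmaps : ∀ k ∈ T, ∑ i, k i - n ∈ Finset.range M := fun k hk => by
    have := hM k hk
    have := hT k hk
    simp; omega
  rw [← Finset.sum_fiberwise_of_maps_to hmaps]
  calc _ ≤ ∑ i ∈ Finset.range M, ∑ k ∈ Finset.piAntidiag Finset.univ (n + i),
        ek d σ k x ^ 2 := by
        refine Finset.sum_le_sum fun i _ => ?_
        refine Finset.sum_le_sum_of_subset_of_nonneg ?_ fun _ _ _ => sq_nonneg _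
        intro k hk
        rw [Finset.mem_filter] at hk
        have := hT k hk.1
        rw [Finset.mem_piAntidiag]
        refine ⟨?_, by simp⟩
        change ∑ i, k i = n + i
        omega
    _ ≤ ∑ i ∈ Finset.range M, (l ^ n / (Nat.factorial n : ℝ) * exp (-l)) *
          (l ^ i / (Nat.factorial i : ℝ)) := by
        refine Finset.sum_le_sum fun i _ => ?_
        rw [sum_piAntidiag_ek_sq, ← hl]
        have h1 : (Nat.factorial n : ℝ) * Nat.factorial i ≤ Nat.factorial (n + i) := by
          exact_mod_cast Nat.le_of_dvd (Nat.factorial_pos _)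
            (Nat.factorial_mul_factorial_dvd_factorial_add n i)
        have h2 : (0 : ℝ) < (Nat.factorial n : ℝ) * Nat.factorial i := by positivity
        calc l ^ (n + i) / (Nat.factorial (n + i) : ℝ) * exp (-l)
            ≤ l ^ (n + i) / ((Nat.factorial n : ℝ) * Nat.factorial i) * exp (-l) := by gcongr
          _ = _ := by rw [pow_add]; field_simp
    _ = (l ^ n / (Nat.factorial n : ℝ) * exp (-l)) *
          ∑ i ∈ Finset.range M, (l ^ i / (Nat.factorial i : ℝ)) := by rw [Finset.mul_sum]
    _ ≤ (l ^ n / (Nat.factorial n : ℝ) * exp (-l)) * exp l := by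
        gcongr
        exact Real.sum_le_exp_of_nonneg hl0 M
    _ = l ^ n / (Nat.factorial n : ℝ) := by
        rw [mul_assoc, ← Real.exp_add]; simp
    _ ≤ _ := by gcongr

/-! ### Covering by truncation -/

/-- The multi-indices of length `d` and degree at most `m`. -/
def degLE (d m : ℕ) : Finset (Fin d → ℕ) :=
  (Finset.range (m + 1)).biUnion fun j => Finset.piAntidiag Finset.univ j

lemma mem_degLE {d m : ℕ} {k : Fin d → ℕ} : k ∈ degLE d m ↔ ∑ i, k i ≤ m := by
  simp [degLE]

lemma card_degLE_le {d : ℕ} (hd : 1 ≤ d) (m : ℕ) : (degLE d m).card ≤ (m + d).choose d := by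
  obtain ⟨c, rfl⟩ : ∃ c, d = c + 1 := ⟨d - 1, by omega⟩
  refine Finset.card_biUnion_le.trans (le_of_eq ?_)
  have h : ∀ j, (Finset.piAntidiag (Finset.univ : Finset (Fin (c + 1))) j).card
      = (c + j).choose c := by
    intro j
    rw [← Finset.map_sym_eq_piAntidiag, Finset.card_map, Finset.sym_univ, Finset.card_univ,
      Sym.card_sym_eq_choose, Fintype.card_fin]
    rw [show c + 1 + j - 1 = c + j by omega, ← Nat.choose_symm_add, add_comm]
  simp_rw [h]
  induction m with
  | zero => simp
  | succ m ih =>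
    rw [Finset.sum_range_succ, ih, show m + 1 + (c + 1) = (m + (c + 1)) + 1 by ring,
      Nat.choose_succ_succ, add_comm, show c + (m + 1) = m + (c + 1) by ring]

/-- Truncation at degree `m`: a tail of sup norm at most `τ` together with a `δ`-net of the unit
ball in coefficient space yields a covering at scale `τ + δ`. -/
lemma covN_UBall_le {d : ℕ} (hd : 1 ≤ d) (σ : ℝ) {m : ℕ} {δ τ ε : ℝ} (hδ : 0 < δ) (hτ : 0 ≤ τ)
    (hε : δ + τ ≤ ε) (htail : (2 * σ ^ 2) ^ (m + 1) / (Nat.factorial (m + 1) : ℝ) ≤ τ ^ 2) :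
    (covN ε (UBall d σ (B2 d)) : ℝ) ≤ (1 + 2 / δ) ^ (m + d).choose d := by
  classical
  set S := degLE d m with hS
  obtain ⟨s, hs, hnet⟩ := exists_net_unitBall (E := EuclideanSpace ℝ S) hδ
  have hxn : ∀ x : B2 d, ‖(x : EuclideanSpace ℝ (Fin d))‖ ≤ 1 := fun x => by
    simpa [B2] using x.2
  have hfull : ∀ (x : B2 d) (T : Finset (Fin d → ℕ)), ∑ k ∈ T, ek d σ k x ^ 2 ≤ 1 := fun x T => by
    simpa using sum_ek_sq_le d σ x (hxn x) 0 T (by simp)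
  -- Evaluation of the function with a given coefficient vector is 1-Lipschitz in sup norm.
  have hev : ∀ (b : EuclideanSpace ℝ S) (x : B2 d), |∑ k : S, b k * ek d σ k x| ≤ ‖b‖ := by
    intro b x
    apply abs_le_of_sq_le_sq _ (norm_nonneg _)
    refine (Finset.sum_mul_sq_le_sq_mul_sq _ _ _).trans ?_
    have h1 : ∑ k : S, b k ^ 2 = ‖b‖ ^ 2 := by rw [EuclideanSpace.norm_sq_eq]; simp
    have h2 : ∑ k : S, ek d σ k x ^ 2 ≤ 1 := by
      rw [Finset.sum_coe_sort S (fun k => ek d σ k x ^ 2)]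
      exact hfull x S
    rw [h1]
    nlinarith [sq_nonneg ‖b‖]
  have hcov : covN ε (UBall d σ (B2 d)) ≤ s.card := by
    refine Nat.sInf_le ⟨fun i x => ∑ k : S, (s.equivFin.symm i : EuclideanSpace ℝ S) k * ek d σ k x,
      fun i => ⟨_, fun x => hev _ x⟩, ?_⟩
    rintro f ⟨a, ha, ha1, habs, hf⟩
    have hT : ∀ T : Finset (Fin d → ℕ), ∑ k ∈ T, a k ^ 2 ≤ 1 := fun T =>
      (ha.sum_le_tsum T fun _ _ => sq_nonneg _).trans ha1
    let b : EuclideanSpace ℝ S := WithLp.toLp 2 fun k => a k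
    have hb : ‖b‖ ≤ 1 := by
      rw [← sq_le_one_iff₀ (norm_nonneg _), EuclideanSpace.norm_sq_eq]
      have := hT S
      rw [← Finset.sum_coe_sort S] at this
      simpa [b] using this
    obtain ⟨c, hc, hbc⟩ := hnet b hb
    refine ⟨s.equivFin ⟨c, hc⟩, fun x => ?_⟩
    simp only [Equiv.symm_apply_apply]
    have h1 : |f x - ∑ k : S, b k * ek d σ k x| ≤ τ := by
      have hsum : HasSum (fun k => a k * ek d σ k x) (f x) := by
        rw [hf x]; exact (habs x).of_abs.hasSum
      have hlim := (Filter.Tendsto.sub_const (b := ∑ k : S, b k * ek d σ k x) hsum).abs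
      refine le_of_tendsto hlim ?_
      filter_upwards [eventually_ge_atTop S] with T hST
      have e : ∑ k : S, b k * ek d σ k x = ∑ k ∈ S, a k * ek d σ k x :=
        Finset.sum_coe_sort S (fun k => a k * ek d σ k x)
      rw [e, ← Finset.sum_sdiff hST, add_sub_cancel_right]
      apply abs_le_of_sq_le_sq _ hτ
      refine (Finset.sum_mul_sq_le_sq_mul_sq _ _ _).trans ?_
      have h2 := hT (T \ S)
      have h3 := sum_ek_sq_le d σ x (hxn x) (m + 1) (T \ S) fun k hk => by
        have := (Finset.mem_sdiff.1 hk).2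
        rw [hS, mem_degLE] at this
        omega
      have h4 : 0 ≤ ∑ k ∈ T \ S, ek d σ k x ^ 2 := Finset.sum_nonneg fun _ _ => sq_nonneg _
      nlinarith
    have h2 : |∑ k : S, b k * ek d σ k x - ∑ k : S, c k * ek d σ k x| ≤ δ := by
      have := (hev (b - c) x).trans hbc
      simpa [sub_mul, Finset.sum_sub_distrib] using this
    calc _ ≤ _ := abs_sub_le _ (∑ k : S, b k * ek d σ k x) _
      _ ≤ ε := by linarith
  have hone : 1 ≤ 1 + 2 / δ := by
    have : 0 < 2 / δ := by positivity
    linarith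
  calc (covN ε (UBall d σ (B2 d)) : ℝ) ≤ s.card := by exact_mod_cast hcov
    _ ≤ _ := hs
    _ ≤ _ := by
      refine pow_le_pow_right₀ hone ?_
      simpa [hS] using card_degLE_le hd m

/-! ### Choice of the degree and monotonicity in `ε` -/

/-- At natural numbers the generalized binomial coefficient is the usual one. -/
lemma gbinom_natCast (m d : ℕ) : gbinom m d = ((m + d).choose d : ℝ) := by
  have h := Nat.ascFactorial_eq_factorial_mul_choose m d
  rw [Nat.ascFactorial_eq_prod_range] at h
  unfold gbinom
  rw [div_eq_iff (by positivity), mul_comm]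
  have h' : ((∏ i ∈ Finset.range d, (m + 1 + i) : ℕ) : ℝ) =
    (Nat.factorial d : ℝ) * ((m + d).choose d : ℝ) := by exact_mod_cast h
  rw [← h']
  push_cast
  exact Finset.prod_congr rfl fun i _ => by ring

lemma gbinom_mono {s t : ℝ} (d : ℕ) (hs : 0 ≤ s) (h : s ≤ t) : gbinom s d ≤ gbinom t d := by
  unfold gbinom
  gcongr

/-- The choice of truncation degree: for `n ≥ x = 2y / w` with `w * exp w = y / (eσ²)`, the tail
`(2σ²)^n / n!` is at most `exp (-2y)`. -/
lemma tail_le {σ y w : ℝ} (hσ : 0 < σ) (hy : 0 < y) (hw : 0 < w)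
    (h : w * exp w = y / (exp 1 * σ ^ 2)) {n : ℕ} (hn : 2 * y / w ≤ n) :
    (2 * σ ^ 2) ^ n / (Nat.factorial n : ℝ) ≤ exp (-(2 * y)) := by
  have hn0 : (0 : ℝ) < n := lt_of_lt_of_le (by positivity) hn
  have h1 : (n : ℝ) ^ n / (Nat.factorial n : ℝ) ≤ exp n :=
    Real.pow_div_factorial_le_exp _ hn0.le n
  -- The defining equation of `w` says `2σ² = x * exp (-w - 1)`.
  have h2 : 2 * σ ^ 2 = 2 * y / w * exp (-w - 1) := by
    rw [eq_div_iff (by positivity)] at h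
    rw [Real.exp_sub, Real.exp_neg, ← h]
    field_simp
  calc (2 * σ ^ 2) ^ n / (Nat.factorial n : ℝ)
      ≤ (n * exp (-w - 1)) ^ n / (Nat.factorial n : ℝ) := by
        rw [h2]; gcongr
    _ = (n : ℝ) ^ n / (Nat.factorial n : ℝ) * exp (n * (-w - 1)) := by
        rw [mul_pow, Real.exp_nat_mul]; ring
    _ ≤ exp n * exp (n * (-w - 1)) := by gcongr
    _ = exp (-(n * w)) := by rw [← Real.exp_add]; congr 1; ring
    _ ≤ exp (-(2 * y)) := by
        rw [div_le_iff₀ hw] at hn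
        gcongr

/-- Monotonicity of `2y/w · ln y / y = 2 ln y / w` along the curve `w * exp w = y / (eσ²)`, from
the point on where `w ≥ 1/σ²`. -/
lemma log_div_le {σ y w y₀ w₀ : ℝ} (hσ : 0 < σ) (hw₀ : σ⁻¹ ^ 2 ≤ w₀) (hww : w₀ ≤ w)
    (h : w * exp w = y / (exp 1 * σ ^ 2)) (h₀ : w₀ * exp w₀ = y₀ / (exp 1 * σ ^ 2)) :
    log y / w ≤ log y₀ / w₀ := by
  have hs : 0 < σ⁻¹ ^ 2 := by positivity
  have hw₀p : 0 < w₀ := hs.trans_le hw₀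
  have hwp : 0 < w := hw₀p.trans_le hww
  have hlog : ∀ {v z : ℝ}, 0 < v → v * exp v = z / (exp 1 * σ ^ 2) →
      log z = 1 - log (σ⁻¹ ^ 2) + log v + v := by
    intro v z hv hz
    rw [eq_div_iff (by positivity)] at hz
    rw [← hz, Real.log_mul (by positivity) (by positivity),
      Real.log_mul (by positivity) (by positivity), Real.log_mul (by positivity) (by positivity),
      Real.log_exp, Real.log_exp, inv_pow, Real.log_inv]
    ring
  rw [hlog hwp h, hlog hw₀p h₀, div_le_div_iff₀ hwp hw₀p]
  have h1 : log (σ⁻¹ ^ 2) ≤ log w₀ := Real.log_le_log hs hw₀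
  -- Concavity of the logarithm at `w₀`.
  have h2 : w₀ * log w ≤ w₀ * log w₀ + (w - w₀) := by
    have := Real.log_le_sub_one_of_pos (div_pos hwp hw₀p)
    rw [Real.log_div hwp.ne' hw₀p.ne'] at this
    have h3 := mul_le_mul_of_nonneg_left this hw₀p.le
    have h4 : w₀ * (w / w₀ - 1) = w - w₀ := by field_simp
    linarith
  nlinarith [mul_nonneg (sub_nonneg.2 hww) (sub_nonneg.2 h1)]

theorem log_covN_UBall_le_of_small_eps (d : ℕ) (hd : 1 ≤ d) (σ : ℝ) (hσ : 0 < σ)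
    (ε₀ : ℝ) (hε₀ : 0 < ε₀) (hε₀' : ε₀ ≤ 4 * Real.exp (-Real.exp (1 + σ⁻¹ ^ 2)))
    (y₀ w₀ x₀ K : ℝ) (hy₀ : y₀ = Real.log (4 / ε₀))
    (hw₀pos : 0 < w₀) (hw₀ : w₀ * Real.exp w₀ = y₀ / (Real.exp 1 * σ ^ 2))
    (hx₀ : x₀ = 2 * y₀ / w₀) (hK : K = gbinom x₀ d * (Real.log y₀ / y₀) ^ d) :
    ∀ ε : ℝ, 0 < ε → ε ≤ ε₀ →
      Real.log (covN ε (UBall d σ (B2 d))) ≤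
        K * (Real.log (4 / ε)) ^ (d + 1) / (Real.log (Real.log (4 / ε))) ^ d := by
  intro ε hε hεε₀
  obtain ⟨y, hy⟩ : ∃ y, y = log (4 / ε) := ⟨_, rfl⟩
  rw [← hy]
  have hs : 0 < σ⁻¹ ^ 2 := by positivity
  have hy₀big : exp (1 + σ⁻¹ ^ 2) ≤ y₀ := by
    rw [hy₀, Real.le_log_iff_exp_le (by positivity), le_div_iff₀ hε₀]
    calc _ ≤ exp (exp (1 + σ⁻¹ ^ 2)) * (4 * exp (-exp (1 + σ⁻¹ ^ 2))) :=
          mul_le_mul_of_nonneg_left hε₀' (Real.exp_pos _).le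
      _ = 4 * (exp (exp (1 + σ⁻¹ ^ 2)) * exp (-exp (1 + σ⁻¹ ^ 2))) := by ring
      _ = 4 := by rw [← Real.exp_add]; simp
  have hyy : y₀ ≤ y := by
    rw [hy₀, hy]
    exact Real.log_le_log (by positivity) (div_le_div_of_nonneg_left (by norm_num) hε hεε₀)
  have hey₀ : exp 1 ≤ y₀ := le_trans (Real.exp_le_exp.2 (by linarith)) hy₀big
  have hey : exp 1 ≤ y := hey₀.trans hyy
  have he2 : 2 < exp 1 := lt_trans (by norm_num) Real.exp_one_gt_d9
  have hy₀p : 0 < y₀ := by linarith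
  have hyp : 0 < y := by linarith
  have hLy : 1 ≤ log y := by rwa [Real.le_log_iff_exp_le hyp]
  have hLy₀ : 1 ≤ log y₀ := by rwa [Real.le_log_iff_exp_le hy₀p]
  have hexpy : exp y = 4 / ε := by rw [hy, Real.exp_log (by positivity)]
  have hεeq : ε = 4 * exp (-y) := by rw [Real.exp_neg, hexpy]; field_simp
  -- The threshold on `ε₀` is exactly what makes `w₀ ≥ 1/σ²`.
  have hw₀big : σ⁻¹ ^ 2 ≤ w₀ := by
    by_contra! hcon
    have h1 : w₀ * exp w₀ < σ⁻¹ ^ 2 * exp (σ⁻¹ ^ 2) := by gcongr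
    rw [hw₀, div_lt_iff₀ (by positivity)] at h1
    have h2 : σ⁻¹ ^ 2 * exp (σ⁻¹ ^ 2) * (exp 1 * σ ^ 2) = exp (1 + σ⁻¹ ^ 2) := by
      rw [Real.exp_add]; field_simp
    linarith
  obtain ⟨w, hww, hw⟩ : ∃ w, w₀ ≤ w ∧ w * exp w = y / (exp 1 * σ ^ 2) := by
    set t := y / (exp 1 * σ ^ 2) with ht
    have ht0 : 0 < t := by positivity
    have hle : w₀ * exp w₀ ≤ t := by rw [hw₀, ht]; gcongr
    have hwt : w₀ ≤ t := by nlinarith [Real.one_le_exp hw₀pos.le]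
    have hcont : ContinuousOn (fun v : ℝ => v * exp v) (Set.Icc w₀ t) := by fun_prop
    obtain ⟨w, hw1, hw2⟩ := intermediate_value_Icc hwt hcont
      ⟨hle, by nlinarith [Real.one_le_exp ht0.le]⟩
    exact ⟨w, hw1.1, hw2⟩
  have hwp : 0 < w := hw₀pos.trans_le hww
  set x := 2 * y / w with hx
  have hxp : 0 < x := by positivity
  have hx₀p : 0 < x₀ := by rw [hx₀]; positivity
  have hcov : (covN ε (UBall d σ (B2 d)) : ℝ) ≤ exp y ^ (⌊x⌋₊ + d).choose d := by
    refine (covN_UBall_le hd σ (m := ⌊x⌋₊) (δ := 3 / 4 * ε) (τ := ε / 4) (by positivity)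
      (by positivity) (by linarith) ?_).trans ?_
    · refine (tail_le hσ hyp hwp hw (by push_cast; exact (Nat.lt_floor_add_one x).le)).trans ?_
      rw [hεeq, mul_div_cancel_left₀ _ (by norm_num), ← Real.exp_nat_mul]
      apply le_of_eq; congr 1; push_cast; ring
    · -- Since `exp y = 4 / ε ≥ 3`, one has `1 + 8 / (3ε) ≤ 4 / ε`.
      have h3 : (3 : ℝ) ≤ exp y := by linarith [Real.add_one_le_exp y]
      have h4 : 1 + 2 / (3 / 4 * ε) ≤ exp y := by
        have : 2 / (3 / 4 * ε) = 2 / 3 * exp y := by rw [hexpy]; field_simp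
        linarith
      gcongr
  have hlogcov : log (covN ε (UBall d σ (B2 d))) ≤ gbinom x d * y := by
    have hg : (((⌊x⌋₊ + d).choose d : ℕ) : ℝ) ≤ gbinom x d := by
      rw [← gbinom_natCast]
      exact gbinom_mono d (Nat.cast_nonneg _) (Nat.floor_le hxp.le)
    have hg0 : 0 ≤ gbinom x d * y :=
      mul_nonneg ((Nat.cast_nonneg _).trans hg) hyp.le
    rcases Nat.eq_zero_or_pos (covN ε (UBall d σ (B2 d))) with h0 | h0
    · rw [h0]; simpa using hg0
    · calc _ ≤ log (exp y ^ (⌊x⌋₊ + d).choose d) :=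
          Real.log_le_log (by exact_mod_cast h0) hcov
        _ = ((⌊x⌋₊ + d).choose d : ℕ) * y := by rw [Real.log_pow, Real.log_exp]
        _ ≤ _ := by gcongr
  -- Each factor `(x + i) ln y / y` of the generalized binomial coefficient decreases in `y`.
  have hmono : gbinom x d * (log y / y) ^ d ≤ K := by
    have hanti : log y / y ≤ log y₀ / y₀ :=
      Real.log_div_self_antitoneOn hey₀ hey hyy
    have hxl : x * (log y / y) ≤ x₀ * (log y₀ / y₀) := by
      have := log_div_le hσ hw₀big hww hw hw₀
      calc x * (log y / y) = 2 * (log y / w) := by rw [hx]; field_simp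
        _ ≤ 2 * (log y₀ / w₀) := by gcongr
        _ = _ := by rw [hx₀]; field_simp
    have hq : 0 ≤ log y / y := by positivity
    rw [hK]
    unfold gbinom
    have hpow : ∀ q : ℝ, q ^ d = ∏ _i ∈ Finset.range d, q := fun q => by simp
    rw [div_mul_eq_mul_div, div_mul_eq_mul_div, hpow, hpow, ← Finset.prod_mul_distrib,
      ← Finset.prod_mul_distrib]
    refine div_le_div_of_nonneg_right (Finset.prod_le_prod (fun i _ => by positivity)
      fun i _ => ?_) (by positivity)
    rw [add_assoc, add_assoc, add_mul, add_mul x₀]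
    gcongr
  calc log (covN ε (UBall d σ (B2 d))) ≤ gbinom x d * y := hlogcov
    _ = gbinom x d * (log y / y) ^ d * (y ^ (d + 1) / log y ^ d) := by
        have : 0 < log y := by linarith
        rw [div_pow, pow_succ]; field_simp
    _ ≤ K * (y ^ (d + 1) / log y ^ d) := by
        have : 0 < log y := by linarith
        gcongr
    _ = _ := by ring
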